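/- arXiv:2503.02243 — 2 statements merged into one kernel-verified Lean document; each statement's English description precedes it below -/
import Mathlib

section
/- For every integer n ≥ 2 and every x ≥ 0, the second moments of the two operators are related by B̃_n(t²;x) = (1/(n−1))·[ n·B_n(t²;x) + B_n(t;x) ], where B_n(t;x), B_n(t²;x), B̃_n(t²;x) denote the operators applied to t ↦ t and t ↦ t² respectively. -/
/-!
The substitution `t = s / (1 + s)` turns the Durrmeyer integral of `s ^ m` into an Euler Beta
integral, so the `j`-th weight of `B̃_n(t ^ m; x)` is `B(j + m, n + 1 - m) / B(j, n + 1)`, that is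
`j (j + 1) ⋯ (j + m - 1) / (n (n - 1) ⋯ (n - m + 1))`. For `m = 2` this is
`(j ^ 2 + j) / (n (n - 1))`, and `j ^ 2`, `j` are the weights of `n ^ 2 B_n(t ^ 2; x)` and
`n B_n(t; x)`. Splitting the series needs the moments of `Θ_j(nx)` to converge, which they do
because the generating series converges at a point beyond `1`.
-/

open Real MeasureTheory Filter Topology

/-- `p_n(x) = n² x² T(1) + n x U(1) + V(1)`. -/
noncomputable def pnx (T U V : ℝ → ℝ) (n : ℕ) (x : ℝ) : ℝ :=
  (n : ℝ) ^ 2 * x ^ 2 * T 1 + (n : ℝ) * x * U 1 + V 1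

/-- The Boas–Buck type operator `B_n(f;x)`. -/
noncomputable def Bop (ξ S T U V : ℝ → ℝ) (Θ : ℕ → ℝ → ℝ) (n : ℕ) (f : ℝ → ℝ) (x : ℝ) : ℝ :=
  (S 1 * ξ (pnx T U V n x))⁻¹ * ∑' j : ℕ, Θ j ((n : ℝ) * x) * f ((j : ℝ) / (n : ℝ))

/-- The Euler Beta function value `B(j, n+1) = Γ(j)Γ(n+1)/Γ(j+n+1)`. -/
noncomputable def betaB (j n : ℕ) : ℝ :=
  Real.Gamma (j : ℝ) * Real.Gamma ((n : ℝ) + 1) / Real.Gamma ((j : ℝ) + (n : ℝ) + 1)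

/-- The Baskakov–Durrmeyer type operator `B̃_n(f;x)`. -/
noncomputable def BDop (ξ S T U V : ℝ → ℝ) (Θ : ℕ → ℝ → ℝ) (n : ℕ) (f : ℝ → ℝ) (x : ℝ) : ℝ :=
  (S 1 * ξ (pnx T U V n x))⁻¹ *
    (Θ 0 ((n : ℝ) * x) * f 0 +
      ∑' j : ℕ, (Θ (j + 1) ((n : ℝ) * x) / betaB (j + 1) n) *
        ∫ s in Set.Ioi (0 : ℝ), s ^ j * (1 + s) ^ (-((n : ℝ) + (j : ℝ) + 2)) * f s)

open ProbabilityTheory (beta beta_eq_betaIntegralReal)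
open scoped Nat

theorem integral_Ioo_rpow_mul_one_sub_rpow {a b : ℝ} (ha : 0 < a) (hb : 0 < b) :
    ∫ t in Set.Ioo (0 : ℝ) 1, t ^ (a - 1) * (1 - t) ^ (b - 1) = beta a b := by
  have complex_eq : Complex.betaIntegral a b =
      ((∫ t in Set.Ioo (0 : ℝ) 1, t ^ (a - 1) * (1 - t) ^ (b - 1) : ℝ) : ℂ) := by
    rw [Complex.betaIntegral, intervalIntegral.integral_of_le zero_le_one,
      integral_Ioc_eq_integral_Ioo, ← integral_complex_ofReal]
    refine setIntegral_congr_fun measurableSet_Ioo fun t ht => ?_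
    simp [Complex.ofReal_cpow ht.1.le, Complex.ofReal_cpow (sub_nonneg.2 ht.2.le)]
  rw [beta_eq_betaIntegralReal a b ha hb, complex_eq, Complex.ofReal_re]

theorem bijOn_div_one_add_Ioi_Ioo :
    Set.BijOn (fun s : ℝ => s / (1 + s)) (Set.Ioi 0) (Set.Ioo 0 1) := by
  refine Set.InvOn.bijOn (f' := fun t => t / (1 - t)) ⟨fun s hs => ?_, fun t ht => ?_⟩
    (fun s hs => ?_) fun t ht => div_pos ht.1 (sub_pos.2 ht.2)
  · have : 1 + s ≠ 0 := (add_pos one_pos hs).ne'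
    simp only
    field_simp
    ring
  · have : 1 - t ≠ 0 := (sub_pos.2 ht.2).ne'
    simp only
    field_simp
    ring
  · have hs : 0 < s := hs
    exact ⟨by positivity, (div_lt_one (by positivity)).2 (lt_one_add s)⟩

theorem hasDerivAt_div_one_add {s : ℝ} (hs : 1 + s ≠ 0) :
    HasDerivAt (fun s : ℝ => s / (1 + s)) ((1 + s) ^ 2)⁻¹ s := by
  refine ((hasDerivAt_id s).div ((hasDerivAt_id s).const_add 1) hs).congr_deriv ?_
  simp

theorem integral_Ioi_rpow_mul_one_add_rpow {a b : ℝ} (ha : 0 < a) (hb : 0 < b) :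
    ∫ s in Set.Ioi (0 : ℝ), s ^ (a - 1) * (1 + s) ^ (-(a + b)) = beta a b := by
  rw [← integral_Ioo_rpow_mul_one_sub_rpow ha hb, ← bijOn_div_one_add_Ioi_Ioo.image_eq,
    integral_image_eq_integral_abs_deriv_smul measurableSet_Ioi
      (fun s hs => (hasDerivAt_div_one_add (add_pos one_pos hs).ne').hasDerivWithinAt)
      bijOn_div_one_add_Ioi_Ioo.injOn]
  refine setIntegral_congr_fun measurableSet_Ioi fun s (hs : 0 < s) => ?_
  have h1s : 0 < 1 + s := by positivity
  have one_sub : 1 - s / (1 + s) = (1 + s)⁻¹ := by field_simp; ring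
  have exponents : -(a + b) = -2 - (a - 1) - (b - 1) := by ring
  have inv_sq : (1 + s) ^ (-2 : ℝ) = ((1 + s) ^ 2)⁻¹ := by
    rw [rpow_neg h1s.le, rpow_two]
  simp only [smul_eq_mul]
  rw [abs_of_pos (by positivity), one_sub, div_rpow hs.le h1s.le, inv_rpow h1s.le, exponents,
    rpow_sub h1s, rpow_sub h1s, inv_sq]
  ring

theorem beta_natCast_add_one (j k : ℕ) :
    beta (j + 1) (k + 1) = (j ! * k ! : ℝ) / (j + k + 1)! := by
  have gamma_sum : Gamma ((j + 1 : ℝ) + (k + 1)) = (j + k + 1)! := by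
    rw [← Gamma_nat_eq_factorial]
    push_cast
    ring_nf
  rw [beta, Gamma_nat_eq_factorial, Gamma_nat_eq_factorial, gamma_sum]

theorem betaB_eq_beta (j n : ℕ) : betaB j n = beta j (n + 1) := by
  rw [betaB, beta, add_assoc]

theorem betaB_pos {j : ℕ} (hj : 0 < j) (n : ℕ) : 0 < betaB j n := by
  rw [betaB_eq_beta]
  exact ProbabilityTheory.beta_pos (mod_cast hj) (by positivity)

theorem beta_natCast_shift {m n : ℕ} (hmn : m ≤ n) (j : ℕ) :
    beta ((j + m : ℕ) + 1) ((n - m : ℕ) + 1) =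
      (j + 1).ascFactorial m / n.descFactorial m * beta (j + 1) (n + 1) := by
  have asc : (j ! * (j + 1).ascFactorial m : ℝ) = (j + m)! :=
    mod_cast Nat.factorial_mul_ascFactorial j m
  have desc : ((n - m)! * n.descFactorial m : ℝ) = n ! :=
    mod_cast Nat.factorial_mul_descFactorial hmn
  have desc_ne : (n.descFactorial m : ℝ) ≠ 0 :=
    mod_cast mt Nat.descFactorial_eq_zero_iff_lt.1 hmn.not_gt
  rw [beta_natCast_add_one, beta_natCast_add_one, ← asc, ← desc,
    show j + m + (n - m) + 1 = j + n + 1 by omega]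
  field_simp

theorem integral_baskakov_mul_pow {m n : ℕ} (hmn : m ≤ n) (j : ℕ) :
    ∫ s in Set.Ioi (0 : ℝ), s ^ j * (1 + s) ^ (-((n : ℝ) + (j : ℝ) + 2)) * s ^ m =
      (j + 1).ascFactorial m / n.descFactorial m * betaB (j + 1) n := by
  rw [betaB_eq_beta, Nat.cast_succ, ← beta_natCast_shift hmn,
    ← integral_Ioi_rpow_mul_one_add_rpow (by positivity) (by positivity)]
  refine setIntegral_congr_fun measurableSet_Ioi fun s _ => ?_
  have exponents : ((j + m : ℕ) + 1 : ℝ) + ((n - m : ℕ) + 1) = n + j + 2 := by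
    push_cast [hmn]
    ring
  simp only [exponents, add_sub_cancel_right, rpow_natCast]
  ring

theorem tsum_add_one_of_apply_zero {M : Type*} [AddCommMonoid M] [TopologicalSpace M] {f : ℕ → M}
    (h0 : f 0 = 0) : ∑' j, f (j + 1) = ∑' j, f j := by
  refine Nat.succ_injective.tsum_eq fun j hj => ?_
  rw [Nat.range_succ]
  exact Nat.pos_of_ne_zero fun hj0 => hj (hj0 ▸ h0)

section Moments

variable (ξ S T U V : ℝ → ℝ) (Θ : ℕ → ℝ → ℝ)

theorem Bop_pow (m n : ℕ) (x : ℝ) :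
    Bop ξ S T U V Θ n (fun t => t ^ m) x =
      (S 1 * ξ (pnx T U V n x))⁻¹ * ((∑' j : ℕ, Θ j (n * x) * (j : ℝ) ^ m) / (n : ℝ) ^ m) := by
  simp only [Bop, div_pow, ← mul_div_assoc, tsum_div_const]

theorem BDop_pow {m n : ℕ} (hm : m ≠ 0) (hmn : m ≤ n) (x : ℝ) :
    BDop ξ S T U V Θ n (fun t => t ^ m) x =
      (S 1 * ξ (pnx T U V n x))⁻¹ *
        ((∑' j : ℕ, Θ j (n * x) * j.ascFactorial m) / n.descFactorial m) := by
  have weight (j : ℕ) : Θ (j + 1) (n * x) / betaB (j + 1) n *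
      ∫ s in Set.Ioi (0 : ℝ), s ^ j * (1 + s) ^ (-((n : ℝ) + (j : ℝ) + 2)) * s ^ m =
        Θ (j + 1) (n * x) * (j + 1).ascFactorial m / n.descFactorial m := by
    have := (betaB_pos j.succ_pos n).ne'
    rw [integral_baskakov_mul_pow hmn]
    field_simp
  have shift : ∑' j : ℕ, Θ (j + 1) (n * x) * (j + 1).ascFactorial m =
      ∑' j : ℕ, Θ j (n * x) * j.ascFactorial m :=
    tsum_add_one_of_apply_zero (f := fun j => Θ j (n * x) * j.ascFactorial m)
      (by obtain ⟨k, rfl⟩ := Nat.exists_eq_succ_of_ne_zero hm; simp [Nat.zero_ascFactorial])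
  simp only [BDop, weight, zero_pow hm, mul_zero, zero_add, tsum_div_const, shift]

end Moments

theorem summable_mul_natCast_pow_of_one_lt {c : ℕ → ℝ} {s : ℝ} (hs : 1 < s)
    (hc : Summable fun j => c j * s ^ j) (m : ℕ) : Summable fun j => c j * (j : ℝ) ^ m :=
  summable_of_isBigO_nat' hc
    ((Asymptotics.isBigO_refl c atTop).mul (isLittleO_pow_const_const_pow_of_one_lt m hs).isBigO)

theorem summable_mul_natCast_pow_of_le {c : ℕ → ℝ} {k m : ℕ} (hkm : k ≤ m)
    (hc : Summable fun j => c j * (j : ℝ) ^ m) : Summable fun j => c j * (j : ℝ) ^ k := by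
  refine .of_norm_bounded_eventually_nat hc.norm ?_
  filter_upwards [eventually_ge_atTop 1] with j hj
  simp only [norm_mul, norm_pow, RCLike.norm_natCast]
  gcongr
  exact_mod_cast hj

theorem stmt6_general (ξ S T U V : ℝ → ℝ) (Θ : ℕ → ℝ → ℝ) {n : ℕ} (hn : 2 ≤ n) (x : ℝ)
    (hΘ : Summable fun j : ℕ => Θ j (n * x) * (j : ℝ) ^ 2) :
    BDop ξ S T U V Θ n (fun t => t ^ 2) x =
      (1 / ((n : ℝ) - 1)) *
        ((n : ℝ) * Bop ξ S T U V Θ n (fun t => t ^ 2) x +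
          Bop ξ S T U V Θ n (fun t => t) x) := by
  have first_moment := Bop_pow ξ S T U V Θ 1 n x
  have first_summable := summable_mul_natCast_pow_of_le one_le_two hΘ
  simp only [pow_one] at first_moment first_summable
  have rising_moment : ∑' j : ℕ, Θ j (n * x) * (j.ascFactorial 2 : ℝ) =
      ∑' j : ℕ, Θ j (n * x) * (j : ℝ) ^ 2 + ∑' j : ℕ, Θ j (n * x) * (j : ℝ) := by
    rw [← hΘ.tsum_add first_summable]
    refine tsum_congr fun j => ?_
    simp only [Nat.ascFactorial_succ, Nat.ascFactorial_zero]
    push_cast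
    ring
  have hn0 : (n : ℝ) ≠ 0 := by positivity
  have hn1 : (n : ℝ) - 1 ≠ 0 := sub_ne_zero.2 (mod_cast (by omega : n ≠ 1))
  rw [BDop_pow ξ S T U V Θ two_ne_zero hn, Bop_pow, first_moment, rising_moment,
    Nat.cast_descFactorial_two]
  field_simp

theorem stmt6
    (ρ : ℝ) (hρ : 1 < ρ)
    (ξ S T U V : ℝ → ℝ) (Θ : ℕ → ℝ → ℝ)
    (p q r u v : ℕ → ℝ)
    (hξser : ∀ t : ℝ, HasSum (fun j : ℕ => p j * t ^ j) (ξ t))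
    (hξnn : ∀ t : ℝ, 0 ≤ ξ t)
    (hSser : ∀ s ∈ Set.Ioo (-ρ) ρ, HasSum (fun j : ℕ => q j * s ^ j) (S s))
    (hTser : ∀ s ∈ Set.Ioo (-ρ) ρ, HasSum (fun j : ℕ => r j * s ^ (j + 1)) (T s))
    (hUser : ∀ s ∈ Set.Ioo (-ρ) ρ, HasSum (fun j : ℕ => u j * s ^ (j + 2)) (U s))
    (hVser : ∀ s ∈ Set.Ioo (-ρ) ρ, HasSum (fun j : ℕ => v j * s ^ (j + 3)) (V s))
    (hS1 : 0 < S 1)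
    (hT'1 : deriv T 1 = 0) (hT''1 : deriv (deriv T) 1 = 0) (hU'1 : deriv U 1 = 1)
    (hΘnn : ∀ (j : ℕ) (y : ℝ), 0 ≤ y → 0 ≤ Θ j y)
    (hgen : ∀ y : ℝ, 0 ≤ y → ∀ s ∈ Set.Ioo (-ρ) ρ,
      HasSum (fun j : ℕ => Θ j y * s ^ j) (S s * ξ (y ^ 2 * T s + y * U s + V s)))
    (hξp : ∀ (m : ℕ), 1 ≤ m → ∀ y : ℝ, 0 ≤ y → 0 < ξ (pnx T U V m y))
    (n : ℕ) (hn : 2 ≤ n) (x : ℝ) (hx : 0 ≤ x) :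
    BDop ξ S T U V Θ n (fun t => t ^ 2) x =
      (1 / ((n : ℝ) - 1)) *
        ((n : ℝ) * Bop ξ S T U V Θ n (fun t => t ^ 2) x +
          Bop ξ S T U V Θ n (fun t => t) x) := by
  obtain ⟨s, one_lt_s, s_lt⟩ := exists_between hρ
  have hsum := (hgen (n * x) (by positivity) s ⟨by linarith, s_lt⟩).summable
  exact stmt6_general ξ S T U V Θ hn x (summable_mul_natCast_pow_of_one_lt one_lt_s hsum 2)
end

section
/- For every integer n ≥ 2 and every x ≥ 0, the second central moment satisfies B̃_n((t−x)²;x) = [ (n/(n−1))·ξ''(p_n(x))/ξ(p_n(x)) − 2ξ'(p_n(x))/ξ(p_n(x)) + 1 ]·x² + [ (2/(n−1))·V'(1)·ξ''(p_n(x))/ξ(p_n(x)) + (1/(n−1))·(2 + U''(1) + 2S'(1)/S(1))·ξ'(p_n(x))/ξ(p_n(x)) − (2/n)·( V'(1)·ξ'(p_n(x))/ξ(p_n(x)) + S'(1)/S(1) ) ]·x + (1/(n(n−1)))·[ (V'(1))²·ξ''(p_n(x))/ξ(p_n(x)) + (2V'(1)S'(1)/S(1) + 2V'(1) + V''(1))·ξ'(p_n(x))/ξ(p_n(x))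 + (2S'(1)+S''(1))/S(1) ], where B̃_n((t−x)²;x) denotes the operator applied to the function t ↦ (t−x)². -/
open Real MeasureTheory Filter Topology

/-!
The functional `f ↦ B(j, n+1)⁻¹ ∫₀^∞ s^{j-1} (1+s)^{-(n+j+1)} f(s) ds` is the mean against a beta
prime distribution, and Beta integrals give its moments
`E t^k = j (j+1) ⋯ (j+k-1) / (n (n-1) ⋯ (n-k+1))`. On `(t - x)²` the operator is therefore a linear
combination of `Σ Θ_j(nx)`, `Σ j Θ_j(nx)` and `Σ j (j-1) Θ_j(nx)`. These sums are `G(1)`, `G'(1)`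
and `G''(1)` for the generating function `G(s) = S(s) ξ(n²x² T(s) + nx U(s) + V(s))`, so the Leibniz
and chain rules at `s = 1`, where `T' = T'' = 0` and `U' = 1`, produce the formula.
-/

section PowerSeries

open FormalMultilinearSeries
variable {𝕜 : Type*} [DenselyNormedField 𝕜] {a : ℕ → 𝕜} {F : 𝕜 → 𝕜} {ρ : ℝ}

theorem hasFPowerSeriesOnBall_ofScalars_of_hasSum (hρ : 0 < ρ)
    (h : ∀ s ∈ Metric.ball (0 : 𝕜) ρ, HasSum (fun j ↦ a j * s ^ j) (F s)) :
    HasFPowerSeriesOnBall F (ofScalars 𝕜 a) 0 (ENNReal.ofReal ρ) where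
  r_le := by
    refine ENNReal.le_of_forall_nnreal_lt fun r hr ↦ ?_
    rw [← ENNReal.ofReal_coe_nnreal, ENNReal.ofReal_lt_ofReal_iff hρ] at hr
    obtain ⟨z, hrz, hzρ⟩ := NormedField.exists_lt_norm_lt 𝕜 r.coe_nonneg hr
    have hbounded := ((h z (by simpa using hzρ)).summable.tendsto_atTop_zero).isBigO_one ℝ
    refine le_radius_of_isBigO _ (Asymptotics.IsBigO.trans ?_ hbounded)
    refine Asymptotics.isBigO_of_le _ fun j ↦ ?_
    rw [ofScalars_norm, norm_mul, norm_mul, norm_norm, norm_pow, norm_pow, Real.norm_eq_abs,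
      abs_of_nonneg r.coe_nonneg]
    gcongr
  r_pos := ENNReal.ofReal_pos.2 hρ
  hasSum {s} hs := by
    have hs' : s ∈ Metric.ball (0 : 𝕜) ρ := by rwa [← Metric.eball_ofReal]
    simpa [ofScalars_apply_eq, mul_comm] using h s hs'

variable [CompleteSpace 𝕜]

theorem hasSum_deriv_of_hasSum_mul_pow
    (h : ∀ s ∈ Metric.ball (0 : 𝕜) ρ, HasSum (fun j ↦ a j * s ^ j) (F s)) :
    ∀ s ∈ Metric.ball (0 : 𝕜) ρ,
      HasSum (fun j : ℕ ↦ ((j + 1 : ℕ) * a (j + 1)) * s ^ j) (deriv F s) := by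
  intro s hs
  have hF := hasFPowerSeriesOnBall_ofScalars_of_hasSum (Metric.pos_of_mem_ball hs) h
  have hsum := (hF.fderiv.hasSum (by rwa [Metric.eball_ofReal])).mapL
    (ContinuousLinearMap.apply 𝕜 𝕜 (1 : 𝕜))
  rw [zero_add] at hsum
  simpa [FormalMultilinearSeries.apply_eq_pow_smul_coeff, mul_comm] using! hsum

theorem contDiffAt_of_hasSum_mul_pow_add (k : ℕ) {n : WithTop ℕ∞}
    (h : ∀ s ∈ Metric.ball (0 : 𝕜) ρ, HasSum (fun j ↦ a j * s ^ (j + k)) (F s))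
    {s : 𝕜} (hs : s ∈ Metric.ball (0 : 𝕜) ρ) : ContDiffAt 𝕜 n F s := by
  let b : ℕ → 𝕜 := fun j ↦ if k ≤ j then a (j - k) else 0
  have hb : ∀ t ∈ Metric.ball (0 : 𝕜) ρ, HasSum (fun j ↦ b j * t ^ j) (F t) := by
    intro t ht
    refine ((add_left_injective k).hasSum_iff fun j hj ↦ ?_).1
      (by simpa [b, Function.comp_def] using h t ht)
    have hjk : ¬ k ≤ j := fun hkj ↦ hj ⟨j - k, Nat.sub_add_cancel hkj⟩
    simp [b, hjk]
  refine ((hasFPowerSeriesOnBall_ofScalars_of_hasSum (Metric.pos_of_mem_ball hs)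
    hb).analyticAt_of_mem ?_).contDiffAt
  rwa [Metric.eball_ofReal]

end PowerSeries

section Beta

open ProbabilityTheory
variable {a b : ℝ}

theorem integral_rpow_mul_one_sub_rpow (ha : 0 < a) (hb : 0 < b) :
    ∫ t in Set.Ioo (0 : ℝ) 1, t ^ (a - 1) * (1 - t) ^ (b - 1) = beta a b := by
  have hcast : ∀ t ∈ Set.Ioo (0 : ℝ) 1, ((t ^ (a - 1) * (1 - t) ^ (b - 1) : ℝ) : ℂ) =
      (t : ℂ) ^ ((a : ℂ) - 1) * (1 - (t : ℂ)) ^ ((b : ℂ) - 1) := by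
    intro t ht
    push_cast [Complex.ofReal_cpow ht.1.le, Complex.ofReal_cpow (sub_nonneg.2 ht.2.le)]
    rfl
  apply Complex.ofReal_injective
  rw [← integral_complex_ofReal, setIntegral_congr_fun measurableSet_Ioo hcast,
    ← integral_Ioc_eq_integral_Ioo, ← intervalIntegral.integral_of_le zero_le_one]
  refine (Complex.betaIntegral_eq_Gamma_mul_div a b (by simpa) (by simpa)).trans ?_
  rw [beta, ← Complex.ofReal_add, Complex.Gamma_ofReal, Complex.Gamma_ofReal, Complex.Gamma_ofReal]
  norm_cast

theorem image_div_one_add_Ioi : (fun s : ℝ ↦ s / (1 + s)) '' Set.Ioi 0 = Set.Ioo 0 1 := by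
  ext t
  constructor
  · rintro ⟨s, hs : 0 < s, rfl⟩
    exact ⟨by positivity, by rw [div_lt_one (by positivity)]; linarith⟩
  · rintro ⟨ht0, ht1⟩
    have : 0 < 1 - t := sub_pos.2 ht1
    exact ⟨t / (1 - t), div_pos ht0 this, by field_simp; ring⟩

theorem integral_rpow_mul_one_add_rpow (ha : 0 < a) (hb : 0 < b) :
    ∫ s in Set.Ioi (0 : ℝ), s ^ (a - 1) * (1 + s) ^ (-(a + b)) = beta a b := by
  have hderiv : ∀ s ∈ Set.Ioi (0 : ℝ),
      HasDerivWithinAt (fun s : ℝ ↦ s / (1 + s)) ((1 + s) ^ (-2 : ℝ)) (Set.Ioi 0) s := by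
    intro s (hs : 0 < s)
    have hs1 : 0 < 1 + s := by positivity
    convert! ((hasDerivAt_id s).div ((hasDerivAt_id s).const_add 1) hs1.ne').hasDerivWithinAt
      using 1
    rw [Real.rpow_neg hs1.le, Real.rpow_two]
    simp [field]
  have hinj : Set.InjOn (fun s : ℝ ↦ s / (1 + s)) (Set.Ioi 0) := by
    intro s (hs : 0 < s) t (ht : 0 < t) hst
    have : s * (1 + t) = t * (1 + s) := (div_eq_div_iff (by positivity) (by positivity)).1 hst
    linarith
  rw [← integral_rpow_mul_one_sub_rpow ha hb, ← image_div_one_add_Ioi,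
    integral_image_eq_integral_abs_deriv_smul measurableSet_Ioi hderiv hinj]
  refine setIntegral_congr_fun measurableSet_Ioi fun s (hs : 0 < s) ↦ ?_
  have hs1 : 0 < 1 + s := by positivity
  have hsub : 1 - s / (1 + s) = (1 + s)⁻¹ := by field_simp; ring
  calc s ^ (a - 1) * (1 + s) ^ (-(a + b))
      = s ^ (a - 1) * (1 + s) ^ (-2 + -(a - 1) + -(b - 1)) := by ring_nf
    _ = |(1 + s) ^ (-2 : ℝ)| • ((s / (1 + s)) ^ (a - 1) * (1 - s / (1 + s)) ^ (b - 1)) := by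
      rw [hsub, Real.rpow_add hs1, Real.rpow_add hs1, Real.div_rpow hs.le hs1.le,
        Real.inv_rpow hs1.le, Real.rpow_neg hs1.le (a - 1), Real.rpow_neg hs1.le (b - 1),
        abs_of_pos (by positivity), smul_eq_mul]
      ring

theorem integrableOn_rpow_mul_one_add_rpow (ha : 0 < a) (hb : 0 < b) :
    IntegrableOn (fun s : ℝ ↦ s ^ (a - 1) * (1 + s) ^ (-(a + b))) (Set.Ioi 0) :=
  .of_integral_ne_zero <| by
    rw [integral_rpow_mul_one_add_rpow ha hb]
    exact (beta_pos ha hb).ne'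

end Beta

section DurrmeyerMean

/-- The mean of `f` against the beta prime density with parameters `j + 1` and `n + 1`: the factor
multiplying `Θ_{j+1}(nx)` in the Baskakov–Durrmeyer operator. The index is shifted by one, so that
`j` runs over all naturals. -/
noncomputable def durrmeyerMean (n j : ℕ) (f : ℝ → ℝ) : ℝ :=
  (∫ s in Set.Ioi (0 : ℝ), s ^ j * (1 + s) ^ (-((n : ℝ) + (j : ℝ) + 2)) * f s) / betaB (j + 1) n

theorem BDop_eq_tsum_mul_durrmeyerMean (ξ S T U V : ℝ → ℝ) (Θ : ℕ → ℝ → ℝ) (n : ℕ) (f : ℝ → ℝ)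
    (x : ℝ) :
    BDop ξ S T U V Θ n f x = (S 1 * ξ (pnx T U V n x))⁻¹ *
      (Θ 0 (n * x) * f 0 + ∑' j, Θ (j + 1) (n * x) * durrmeyerMean n j f) := by
  simp only [BDop, durrmeyerMean, div_mul_eq_mul_div, mul_div_assoc]

variable {n k : ℕ}

theorem pow_mul_one_add_rpow_mul_pow (n j k : ℕ) {s : ℝ} (hs : 0 < s) :
    s ^ j * (1 + s) ^ (-((n : ℝ) + (j : ℝ) + 2)) * s ^ k =
      s ^ (((j : ℝ) + k + 1) - 1) * (1 + s) ^ (-(((j : ℝ) + k + 1) + ((n : ℝ) - k + 1))) := by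
  rw [add_sub_cancel_right, Real.rpow_add hs, Real.rpow_natCast, Real.rpow_natCast]
  ring_nf

theorem integrableOn_durrmeyer_kernel_mul_pow (j : ℕ) (hk : k ≤ n) :
    IntegrableOn (fun s : ℝ ↦ s ^ j * (1 + s) ^ (-((n : ℝ) + (j : ℝ) + 2)) * s ^ k)
      (Set.Ioi 0) := by
  have hkn : (k : ℝ) ≤ n := by exact_mod_cast hk
  refine (integrableOn_rpow_mul_one_add_rpow (a := (j : ℝ) + k + 1) (b := (n : ℝ) - k + 1)
    (by positivity) (by linarith)).congr_fun (fun s hs ↦ ?_) measurableSet_Ioi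
  exact (pow_mul_one_add_rpow_mul_pow n j k hs).symm

theorem durrmeyerMean_pow (j : ℕ) (hk : k ≤ n) :
    durrmeyerMean n j (fun t ↦ t ^ k) = (j + 1).ascFactorial k / n.descFactorial k := by
  obtain ⟨m, rfl⟩ := Nat.exists_eq_add_of_le' hk
  have hint : ∫ s in Set.Ioi (0 : ℝ),
      s ^ j * (1 + s) ^ (-(((m + k : ℕ) : ℝ) + (j : ℝ) + 2)) * s ^ k =
        ProbabilityTheory.beta ((j : ℝ) + k + 1) (m + 1) := by
    rw [← integral_rpow_mul_one_add_rpow (by positivity) (by positivity)]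
    refine setIntegral_congr_fun measurableSet_Ioi fun s hs ↦ ?_
    refine (pow_mul_one_add_rpow_mul_pow (m + k) j k hs).trans ?_
    simp only [Nat.cast_add, add_sub_cancel_right]
  have hasc : ((j + k).factorial : ℝ) = j.factorial * (j + 1).ascFactorial k := by
    exact_mod_cast (Nat.factorial_mul_ascFactorial j k).symm
  have hdesc : ((m + k).factorial : ℝ) = m.factorial * (m + k).descFactorial k := by
    exact_mod_cast (by simpa using (Nat.factorial_mul_descFactorial hk).symm)
  have hsum : (j : ℝ) + k + 1 + (m + 1) = (j + 1 : ℕ) + (m + k : ℕ) + 1 := by push_cast; ring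
  have hGamma : Real.Gamma ((j + 1 : ℕ) + (m + k : ℕ) + 1) ≠ 0 :=
    (Real.Gamma_pos_of_pos (by positivity)).ne'
  have hdesc_ne : ((m + k).descFactorial k : ℝ) ≠ 0 := by
    exact_mod_cast (Nat.descFactorial_pos.2 hk).ne'
  rw [durrmeyerMean, hint, ProbabilityTheory.beta, betaB, hsum, div_div_div_cancel_right₀ hGamma,
    ← Nat.cast_add, Real.Gamma_nat_eq_factorial, Real.Gamma_nat_eq_factorial,
    Real.Gamma_nat_eq_factorial, Nat.cast_succ, Real.Gamma_nat_eq_factorial, hasc, hdesc]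
  field_simp

theorem durrmeyerMean_sum_mul_pow (j : ℕ) {K : Finset ℕ} (hK : ∀ k ∈ K, k ≤ n) (c : ℕ → ℝ) :
    durrmeyerMean n j (fun t ↦ ∑ k ∈ K, c k * t ^ k) =
      ∑ k ∈ K, c k * durrmeyerMean n j (fun t ↦ t ^ k) := by
  simp only [durrmeyerMean, Finset.mul_sum, mul_left_comm _ (c _), ← mul_div_assoc]
  rw [integral_finsetSum K fun k hk ↦
    (integrableOn_durrmeyer_kernel_mul_pow j (hK k hk)).const_mul (c k), Finset.sum_div]
  simp only [integral_const_mul]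

theorem durrmeyerMean_sub_pow (j : ℕ) {m : ℕ} (hm : m ≤ n) (x : ℝ) :
    durrmeyerMean n j (fun t ↦ (t - x) ^ m) = ∑ k ∈ Finset.range (m + 1),
      (-x) ^ (m - k) * m.choose k * ((j + 1).ascFactorial k / n.descFactorial k) := by
  have hbinom : (fun t : ℝ ↦ (t - x) ^ m) =
      fun t ↦ ∑ k ∈ Finset.range (m + 1), (-x) ^ (m - k) * m.choose k * t ^ k := by
    funext t
    rw [sub_eq_add_neg, add_pow]
    exact Finset.sum_congr rfl fun k _ ↦ by ring
  have hle : ∀ k ∈ Finset.range (m + 1), k ≤ n := fun k hk ↦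
    (Finset.mem_range_succ_iff.1 hk).trans hm
  rw [hbinom, durrmeyerMean_sum_mul_pow j hle]
  exact Finset.sum_congr rfl fun k hk ↦ by rw [durrmeyerMean_pow j (hle k hk)]

theorem durrmeyerMean_sub_sq (j : ℕ) (hn : 2 ≤ n) (x : ℝ) :
    durrmeyerMean n j (fun t ↦ (t - x) ^ 2) =
      (j + 1) * (j + 2) / (n * (n - 1)) - 2 * x * ((j + 1) / n) + x ^ 2 := by
  have hcast : ((n - 1 : ℕ) : ℝ) = n - 1 := Nat.cast_pred (by lia)
  rw [durrmeyerMean_sub_pow j hn x]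
  simp only [Finset.sum_range_succ, Finset.sum_range_zero, Nat.ascFactorial, Nat.descFactorial,
    Nat.sub_zero, Nat.choose_zero_right, Nat.choose_one_right, Nat.choose_self]
  push_cast [hcast]
  ring

theorem hasSum_mul_durrmeyerMean_sub_sq {ρ : ℝ} (hρ : 1 < ρ) {θ : ℕ → ℝ} {G : ℝ → ℝ}
    (hG : ∀ s ∈ Metric.ball (0 : ℝ) ρ, HasSum (fun j ↦ θ j * s ^ j) (G s)) (hn : 2 ≤ n) (x : ℝ) :
    HasSum (fun j ↦ θ (j + 1) * durrmeyerMean n j (fun t ↦ (t - x) ^ 2))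
      ((iteratedDeriv 2 G 1 + 2 * deriv G 1) / (n * (n - 1)) - 2 * x / n * deriv G 1
        + x ^ 2 * (G 1 - θ 0)) := by
  have hmem : (1 : ℝ) ∈ Metric.ball (0 : ℝ) ρ := by simpa using hρ
  have hG' := hasSum_deriv_of_hasSum_mul_pow hG
  have hsum₀ : HasSum (fun j ↦ θ (j + 1)) (G 1 - θ 0) := by
    simpa using (hasSum_nat_add_iff' 1).2 (hG 1 hmem)
  have hsum₁ : HasSum (fun j : ℕ ↦ ((j : ℝ) + 1) * θ (j + 1)) (deriv G 1) := by
    simpa using hG' 1 hmem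
  have hsum₂ : HasSum (fun j : ℕ ↦ (j : ℝ) * ((j + 1) * θ (j + 1))) (iteratedDeriv 2 G 1) := by
    rw [← hasSum_nat_add_iff' 1, iteratedDeriv_succ, iteratedDeriv_one]
    simpa using hasSum_deriv_of_hasSum_mul_pow hG' 1 hmem
  refine ((((hsum₂.add (hsum₁.mul_left 2)).div_const ((n : ℝ) * (n - 1))).sub
    (hsum₁.mul_left (2 * x / n))).add (hsum₀.mul_left (x ^ 2))).congr_fun fun j ↦ ?_
  rw [durrmeyerMean_sub_sq j hn x]
  ring

end DurrmeyerMean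

section Calculus

variable {𝕜 : Type*} [NontriviallyNormedField 𝕜] {f g φ : 𝕜 → 𝕜} {a : 𝕜}

theorem deriv_mul_comp (hf : DifferentiableAt 𝕜 f a) (hg : DifferentiableAt 𝕜 g (φ a))
    (hφ : DifferentiableAt 𝕜 φ a) :
    deriv (f * g ∘ φ) a = deriv f a * g (φ a) + f a * (deriv g (φ a) * deriv φ a) := by
  rw [deriv_mul hf (hg.comp a hφ), deriv_comp a hg hφ, Function.comp_apply]

theorem iteratedDeriv_two_mul_comp (hf : ContDiffAt 𝕜 2 f a) (hg : ContDiffAt 𝕜 2 g (φ a))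
    (hφ : ContDiffAt 𝕜 2 φ a) :
    iteratedDeriv 2 (f * g ∘ φ) a =
      iteratedDeriv 2 f a * g (φ a) + 2 * (deriv f a * (deriv g (φ a) * deriv φ a)) +
        f a * (iteratedDeriv 2 g (φ a) * deriv φ a ^ 2 + deriv g (φ a) * iteratedDeriv 2 φ a) := by
  rw [iteratedDeriv_mul hf (hg.comp a hφ)]
  simp only [Finset.sum_range_succ, Finset.sum_range_zero, iteratedDeriv_zero, iteratedDeriv_one,
    iteratedDeriv_comp_two hg hφ, deriv_comp a (hg.differentiableAt two_ne_zero)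
    (hφ.differentiableAt two_ne_zero), Function.comp_apply, Nat.choose_zero_right,
    Nat.choose_one_right, Nat.choose_self, Nat.reduceSub, Nat.cast_one, Nat.cast_ofNat, tsub_zero,
    tsub_self]
  ring

theorem iteratedDeriv_const_mul_add_const_mul_add (k : ℕ) (c d : 𝕜) (hf : ContDiffAt 𝕜 k f a)
    (hg : ContDiffAt 𝕜 k g a) (hφ : ContDiffAt 𝕜 k φ a) :
    iteratedDeriv k (fun s ↦ c * f s + d * g s + φ s) a =
      c * iteratedDeriv k f a + d * iteratedDeriv k g a + iteratedDeriv k φ a := by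
  rw [iteratedDeriv_fun_add (by fun_prop) hφ, iteratedDeriv_fun_add (by fun_prop) (by fun_prop),
    iteratedDeriv_const_mul c hf, iteratedDeriv_const_mul d hg]

end Calculus

theorem stmt8_general {ρ : ℝ} (hρ : 1 < ρ) {ξ S T U V : ℝ → ℝ} {Θ : ℕ → ℝ → ℝ} {n : ℕ}
    (hn : 2 ≤ n) {x : ℝ}
    (hξ : ContDiffAt ℝ 2 ξ (pnx T U V n x)) (hS : ContDiffAt ℝ 2 S 1) (hT : ContDiffAt ℝ 2 T 1)
    (hU : ContDiffAt ℝ 2 U 1) (hV : ContDiffAt ℝ 2 V 1)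
    (hS1 : S 1 ≠ 0) (hξp : ξ (pnx T U V n x) ≠ 0)
    (hT'1 : deriv T 1 = 0) (hT''1 : deriv (deriv T) 1 = 0) (hU'1 : deriv U 1 = 1)
    (hgen : ∀ s ∈ Set.Ioo (-ρ) ρ, HasSum (fun j : ℕ => Θ j (n * x) * s ^ j)
      (S s * ξ ((n * x) ^ 2 * T s + n * x * U s + V s))) :
    BDop ξ S T U V Θ n (fun t => (t - x) ^ 2) x =
      ((n : ℝ) / ((n : ℝ) - 1) *
            (deriv (deriv ξ) (pnx T U V n x) / ξ (pnx T U V n x)) -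
          2 * (deriv ξ (pnx T U V n x) / ξ (pnx T U V n x)) + 1) * x ^ 2 +
        (2 / ((n : ℝ) - 1) * deriv V 1 *
            (deriv (deriv ξ) (pnx T U V n x) / ξ (pnx T U V n x)) +
          1 / ((n : ℝ) - 1) * (2 + deriv (deriv U) 1 + 2 * deriv S 1 / S 1) *
            (deriv ξ (pnx T U V n x) / ξ (pnx T U V n x)) -
          2 / (n : ℝ) *
            (deriv V 1 * (deriv ξ (pnx T U V n x) / ξ (pnx T U V n x)) +
              deriv S 1 / S 1)) * x +
        (1 / ((n : ℝ) * ((n : ℝ) - 1))) *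
          ((deriv V 1) ^ 2 * (deriv (deriv ξ) (pnx T U V n x) / ξ (pnx T U V n x)) +
            (2 * deriv V 1 * deriv S 1 / S 1 + 2 * deriv V 1 + deriv (deriv V) 1) *
              (deriv ξ (pnx T U V n x) / ξ (pnx T U V n x)) +
            (2 * deriv S 1 + deriv (deriv S) 1) / S 1) := by
  let φ : ℝ → ℝ := fun s ↦ (n * x) ^ 2 * T s + n * x * U s + V s
  have hφ1 : φ 1 = pnx T U V n x := by simp only [φ, pnx]; ring
  have hφ : ContDiffAt ℝ 2 φ 1 := by fun_prop
  have hφ' : deriv φ 1 = n * x + deriv V 1 := by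
    have h := iteratedDeriv_const_mul_add_const_mul_add 1 ((n * x) ^ 2) (n * x)
      (hT.of_le one_le_two) (hU.of_le one_le_two) (hV.of_le one_le_two)
    simpa [hT'1, hU'1] using h
  have hφ'' : iteratedDeriv 2 φ 1 = n * x * deriv (deriv U) 1 + deriv (deriv V) 1 := by
    have h := iteratedDeriv_const_mul_add_const_mul_add 2 ((n * x) ^ 2) (n * x) hT hU hV
    simpa [iteratedDeriv_succ, hT''1] using h
  rw [← hφ1] at hξ hξp ⊢
  have hG : ∀ s ∈ Metric.ball 0 ρ, HasSum (fun j ↦ Θ j (n * x) * s ^ j) ((S * ξ ∘ φ) s) := by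
    rw [Real.ball_zero_eq_Ioo]
    exact hgen
  have hn0 : (n : ℝ) ≠ 0 := by positivity
  have hn1 : (n : ℝ) - 1 ≠ 0 := sub_ne_zero.2 (by exact_mod_cast (by omega : n ≠ 1))
  rw [BDop_eq_tsum_mul_durrmeyerMean, (hasSum_mul_durrmeyerMean_sub_sq hρ hG hn x).tsum_eq,
    deriv_mul_comp (hS.differentiableAt two_ne_zero) (hξ.differentiableAt two_ne_zero)
      (hφ.differentiableAt two_ne_zero), iteratedDeriv_two_mul_comp hS hξ hφ, hφ', hφ'', ← hφ1]
  simp only [iteratedDeriv_succ, iteratedDeriv_zero, Pi.mul_apply, Function.comp_apply]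
  field_simp
  ring

theorem stmt8
    (ρ : ℝ) (hρ : 1 < ρ)
    (ξ S T U V : ℝ → ℝ) (Θ : ℕ → ℝ → ℝ)
    (p q r u v : ℕ → ℝ)
    (hξser : ∀ t : ℝ, HasSum (fun j : ℕ => p j * t ^ j) (ξ t))
    (hξnn : ∀ t : ℝ, 0 ≤ ξ t)
    (hSser : ∀ s ∈ Set.Ioo (-ρ) ρ, HasSum (fun j : ℕ => q j * s ^ j) (S s))
    (hTser : ∀ s ∈ Set.Ioo (-ρ) ρ, HasSum (fun j : ℕ => r j * s ^ (j + 1)) (T s))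
    (hUser : ∀ s ∈ Set.Ioo (-ρ) ρ, HasSum (fun j : ℕ => u j * s ^ (j + 2)) (U s))
    (hVser : ∀ s ∈ Set.Ioo (-ρ) ρ, HasSum (fun j : ℕ => v j * s ^ (j + 3)) (V s))
    (hS1 : 0 < S 1)
    (hT'1 : deriv T 1 = 0) (hT''1 : deriv (deriv T) 1 = 0) (hU'1 : deriv U 1 = 1)
    (hΘnn : ∀ (j : ℕ) (y : ℝ), 0 ≤ y → 0 ≤ Θ j y)
    (hgen : ∀ y : ℝ, 0 ≤ y → ∀ s ∈ Set.Ioo (-ρ) ρ,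
      HasSum (fun j : ℕ => Θ j y * s ^ j) (S s * ξ (y ^ 2 * T s + y * U s + V s)))
    (hξp : ∀ (m : ℕ), 1 ≤ m → ∀ y : ℝ, 0 ≤ y → 0 < ξ (pnx T U V m y))
    (n : ℕ) (hn : 2 ≤ n) (x : ℝ) (hx : 0 ≤ x) :
    BDop ξ S T U V Θ n (fun t => (t - x) ^ 2) x =
      ((n : ℝ) / ((n : ℝ) - 1) *
            (deriv (deriv ξ) (pnx T U V n x) / ξ (pnx T U V n x)) -
          2 * (deriv ξ (pnx T U V n x) / ξ (pnx T U V n x)) + 1) * x ^ 2 +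
        (2 / ((n : ℝ) - 1) * deriv V 1 *
            (deriv (deriv ξ) (pnx T U V n x) / ξ (pnx T U V n x)) +
          1 / ((n : ℝ) - 1) * (2 + deriv (deriv U) 1 + 2 * deriv S 1 / S 1) *
            (deriv ξ (pnx T U V n x) / ξ (pnx T U V n x)) -
          2 / (n : ℝ) *
            (deriv V 1 * (deriv ξ (pnx T U V n x) / ξ (pnx T U V n x)) +
              deriv S 1 / S 1)) * x +
        (1 / ((n : ℝ) * ((n : ℝ) - 1))) *
          ((deriv V 1) ^ 2 * (deriv (deriv ξ) (pnx T U V n x) / ξ (pnx T U V n x)) +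
            (2 * deriv V 1 * deriv S 1 / S 1 + 2 * deriv V 1 + deriv (deriv V) 1) *
              (deriv ξ (pnx T U V n x) / ξ (pnx T U V n x)) +
            (2 * deriv S 1 + deriv (deriv S) 1) / S 1) := by
  have hξ (t : ℝ) : ContDiffAt ℝ 2 ξ t :=
    contDiffAt_of_hasSum_mul_pow_add 0 (ρ := |t| + 1) (fun s _ ↦ hξser s) (by simp)
  simp only [← Real.ball_zero_eq_Ioo] at hSser hTser hUser hVser
  have h1 : (1 : ℝ) ∈ Metric.ball 0 ρ := by simpa using hρ
  exact stmt8_general hρ hn (hξ _) (contDiffAt_of_hasSum_mul_pow_add 0 hSser h1)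
    (contDiffAt_of_hasSum_mul_pow_add 1 hTser h1) (contDiffAt_of_hasSum_mul_pow_add 2 hUser h1)
    (contDiffAt_of_hasSum_mul_pow_add 3 hVser h1) hS1.ne' (hξp n (by omega) x hx).ne' hT'1 hT''1
    hU'1 (hgen (n * x) (by positivity))
end
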